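/- Let N ≥ 1 and let H^{(N)} be the diagonal matrix indexed by (Fin N → Fin 2) whose diagonal entry at x equals the number of indices i with x(i) = 1 (the Hamming weight of x). Then the real dimension of the real vector space of 2^N × 2^N complex matrices a that are skew-Hermitian, traceless, and commute with H^{(N)} equals the central binomial coefficient C(2N, N) − 1. -/

import Mathlib

open Matrix

/-- The Hamming-weight Hamiltonian `H^{(N)}`: the diagonal matrix indexed by
`Fin N → Fin 2` whose diagonal entry at `x` is the number of indices `i` with `x i = 1`. -/
def hammingHamiltonian (N : ℕ) : Matrix (Fin N → Fin 2) (Fin N → Fin 2) ℂ :=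
  Matrix.diagonal fun x => ((Finset.univ.filter fun i => x i = 1).card : ℂ)

def hWt {N : ℕ} (x : Fin N → Fin 2) : ℕ := (Finset.univ.filter fun i => x i = 1).card

theorem hWt_card (N k : ℕ) :
    (Finset.univ.filter fun x : Fin N → Fin 2 => hWt x = k).card = N.choose k := by
  classical
  have h : (Finset.powersetCard k (Finset.univ : Finset (Fin N))).card = N.choose k := by simp
  rw [← h]
  refine Finset.card_bij' (fun x _ => Finset.univ.filter fun i => x i = 1)
    (fun s _ => fun i => if i ∈ s then 1 else 0) ?_ ?_ ?_ ?_
  · intro x hx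
    have h2 := (Finset.mem_filter.1 hx).2
    simpa [Finset.mem_powersetCard, hWt] using h2
  · intro s hs
    refine Finset.mem_filter.2 ⟨Finset.mem_univ _, ?_⟩
    simpa [Finset.mem_powersetCard, hWt] using hs
  · intro x hx
    funext i
    have : x i = 0 ∨ x i = 1 := by omega
    rcases this with h | h <;> simp [h]
  · intro s hs
    ext i
    simp

abbrev HP (N : ℕ) := {p : (Fin N → Fin 2) × (Fin N → Fin 2) // hWt p.1 = hWt p.2}

theorem HP_card (N : ℕ) : Fintype.card (HP N) = (2 * N).choose N := by
  classical
  rw [← Nat.sum_range_choose_sq N, Fintype.card_subtype]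
  rw [Finset.card_eq_sum_card_fiberwise (f := fun p => hWt p.1) (t := Finset.range (N + 1))]
  · refine Finset.sum_congr rfl fun k _ => ?_
    rw [← hWt_card N k, sq, ← Finset.card_product]
    congr 1
    ext p
    simp
    grind
  · intro p _
    have : hWt p.1 ≤ N := by
      simpa [hWt] using Finset.card_le_univ (Finset.univ.filter fun i => p.1 i = 1)
    simp
    omega

def hDiag (N : ℕ) : (HP N → ℝ) →ₗ[ℝ] ℝ where
  toFun f := ∑ x, f ⟨(x, x), rfl⟩
  map_add' f g := by simp [Finset.sum_add_distrib]
  map_smul' c f := by simp [Finset.mul_sum]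

def hMap (N : ℕ) : Matrix (Fin N → Fin 2) (Fin N → Fin 2) ℂ →ₗ[ℝ] (HP N → ℝ) where
  toFun a p := (a p.1.1 p.1.2).re + (a p.1.1 p.1.2).im
  map_add' f g := by funext p; simp; ring
  map_smul' c f := by funext p; simp; ring

theorem hDiag_ker (N : ℕ) : Module.finrank ℝ (LinearMap.ker (hDiag N)) = (2 * N).choose N - 1 := by
  classical
  have h := LinearMap.finrank_range_add_finrank_ker (hDiag N)
  have hs : LinearMap.range (hDiag N) = ⊤ := by
    refine LinearMap.range_eq_top.2 (LinearMap.surjective ?_)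
    intro h0
    have := LinearMap.congr_fun h0 (fun _ => 1)
    simp [hDiag] at this
  rw [hs, finrank_top, Module.finrank_self, Module.finrank_pi, HP_card] at h
  omega

theorem hComm (N : ℕ) (a : Matrix (Fin N → Fin 2) (Fin N → Fin 2) ℂ) :
    a * hammingHamiltonian N = hammingHamiltonian N * a ↔
      ∀ x y, hWt x ≠ hWt y → a x y = 0 := by
  have key : ∀ x y, (a * hammingHamiltonian N) x y = (hammingHamiltonian N * a) x y ↔
      (hWt x ≠ hWt y → a x y = 0) := by
    intro x y
    rw [hammingHamiltonian, Matrix.mul_diagonal, Matrix.diagonal_mul]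
    change a x y * (hWt y : ℂ) = (hWt x : ℂ) * a x y ↔ _
    rw [mul_comm, mul_eq_mul_right_iff, Nat.cast_inj]
    tauto
  rw [← Matrix.ext_iff]
  simp only [key]

/-- For `N ≥ 1`, the real dimension of the real vector space of
skew-Hermitian, traceless `2^N × 2^N` matrices commuting with `H^{(N)}` equals the central
binomial coefficient `C(2N, N) − 1`. -/
theorem finrank_energy_preserving (N : ℕ) (hN : 1 ≤ N)
    (V : Submodule ℝ (Matrix (Fin N → Fin 2) (Fin N → Fin 2) ℂ))
    (hV : ∀ a, a ∈ V ↔ aᴴ = -a ∧ a.trace = 0 ∧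
      a * hammingHamiltonian N = hammingHamiltonian N * a) :
    Module.finrank ℝ V = Nat.choose (2 * N) N - 1 := by
  classical
  simp only [hComm] at hV
  have hsk : ∀ a : Matrix (Fin N → Fin 2) (Fin N → Fin 2) ℂ, aᴴ = -a →
      ∀ x y, (a y x).re = -(a x y).re ∧ (a y x).im = (a x y).im := by
    intro a ha x y
    have h := congrFun (congrFun ha x) y
    have h1 := congrArg Complex.re h
    have h2 := congrArg Complex.im h
    simp at h1 h2
    exact ⟨h1, h2⟩
  have hinj : Function.Injective ((hMap N).domRestrict V) := by
    rw [← LinearMap.ker_eq_bot, LinearMap.ker_eq_bot']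
    rintro ⟨a, ha⟩ h0
    obtain ⟨h1, h2, h3⟩ := (hV a).1 ha
    apply Subtype.ext
    ext x y
    by_cases hxy : hWt x = hWt y
    · have e1 := congrFun h0 ⟨(x, y), hxy⟩
      have e2 := congrFun h0 ⟨(y, x), hxy.symm⟩
      simp [hMap] at e1 e2
      obtain ⟨e3, e4⟩ := hsk a h1 x y
      apply Complex.ext
      · simp; linarith
      · simp; linarith
    · exact h3 x y hxy
  rw [← LinearMap.finrank_range_of_inj hinj, ← hDiag_ker]
  suffices h : LinearMap.range ((hMap N).domRestrict V) = LinearMap.ker (hDiag N) by rw [h]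
  ext f
  rw [LinearMap.mem_range, LinearMap.mem_ker]
  constructor
  · rintro ⟨⟨a, ha⟩, rfl⟩
    obtain ⟨h1, h2, h3⟩ := (hV a).1 ha
    have e := congrArg Complex.im h2
    simp only [Matrix.trace, Matrix.diag, Complex.im_sum, Complex.zero_im] at e
    change ∑ x, ((a x x).re + (a x x).im) = 0
    rw [← e]
    refine Finset.sum_congr rfl fun x _ => ?_
    have := (hsk a h1 x x).1
    linarith
  · intro hf
    let g : (Fin N → Fin 2) → (Fin N → Fin 2) → ℝ := fun x y =>
      if h : hWt x = hWt y then f ⟨(x, y), h⟩ else 0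
    let a : Matrix (Fin N → Fin 2) (Fin N → Fin 2) ℂ := fun x y =>
      ⟨(g x y - g y x) / 2, (g x y + g y x) / 2⟩
    refine ⟨⟨a, (hV a).2 ⟨?_, ?_, ?_⟩⟩, ?_⟩
    · ext x y
      apply Complex.ext
      · change (g y x - g x y) / 2 = -((g x y - g y x) / 2); ring
      · change -((g y x + g x y) / 2) = -((g x y + g y x) / 2); ring
    · apply Complex.ext
      · simp only [Matrix.trace, Matrix.diag, Complex.re_sum, Complex.zero_re]
        refine Finset.sum_eq_zero fun x _ => ?_
        simp [a]
      · simp only [Matrix.trace, Matrix.diag, Complex.im_sum, Complex.zero_im]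
        rw [← hf]
        change _ = ∑ x, f ⟨(x, x), rfl⟩
        refine Finset.sum_congr rfl fun x _ => ?_
        simp [a, g]
    · intro x y hxy
      apply Complex.ext <;> simp [a, g, hxy, hxy.symm]
    · funext ⟨⟨x, y⟩, hxy⟩
      change (g x y - g y x) / 2 + (g x y + g y x) / 2 = _
      have : g x y = f ⟨(x, y), hxy⟩ := by simp only [g]; exact dif_pos hxy
      rw [← this]; ring
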